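/- (Main theorem: Poisson approximation of the entropy of dependent Bernoulli sums) Let I be a finite index set with m = |I|, and for each α ∈ I let X_α be a Bernoulli random variable with p_α = P(X_α = 1) > 0. Let W = Σ_{α∈I} X_α and λ = Σ_{α∈I} p_α ∈ (0, ∞). For each α ∈ I let B_α ⊆ I with α ∈ B_α, and define b_1 = Σ_{α∈I} Σ_{β∈B_α} p_α p_β, b_2 = Σ_{α∈I} Σ_{β∈B_α, β≠α} E[X_α X_β], b_3 = Σ_{α∈I} E| E[X_α − p_α | σ({X_β : β ∈ I \ B_α})] |. Define a(λ) = 2[(b_1 + b_2)(1 − e^{−λ})/λ + b_3 · min{1, 1.4/√λ}] and b(λ) = [max{λ log(e/λ), 0} + λ² + (6 log(2π) + 1)/12] · exp{−[λ + (m−1) log((m−1)/(λe))]}. Let Z ∼ Po(λ). If a(λ) ≤ 1/2 and λ ≤ m − 1, then the difference between the entropies (to the base e) of Z and W satisfies |H(Z) − H(W)| ≤ a(λ) log((m + 2)/a(λ)) + b(λ). -/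

import Mathlib

open MeasureTheory ProbabilityTheory Real

/-- The Poisson probability mass function with mean `lam`. -/
noncomputable def poissonPMF (lam : ℝ) (k : ℕ) : ℝ :=
  Real.exp (-lam) * lam ^ k / (Nat.factorial k)

/-- The entropy (in nats) of a pmf on the non-negative integers. -/
noncomputable def entropyPMF (p : ℕ → ℝ) : ℝ := ∑' k, Real.negMulLog (p k)

/-- The pmf of an (integer-valued) real random variable `W` under `μ`. -/
noncomputable def pmfOf {Ω : Type*} [MeasurableSpace Ω] (μ : Measure Ω) (W : Ω → ℝ) (k : ℕ) : ℝ :=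
  (μ {ω | W ω = k}).toReal

/-- `X` is a Bernoulli random variable with parameter `p` under `μ`:
it takes values `0` and `1`, and `P(X = 1) = p`. -/
def IsBernoulli {Ω : Type*} [MeasurableSpace Ω] (μ : Measure Ω) (X : Ω → ℝ) (p : ℝ) : Prop :=
  Measurable X ∧ (∀ ω, X ω = 0 ∨ X ω = 1) ∧ μ {ω | X ω = 1} = ENNReal.ofReal p

/-- The σ-algebra generated by the family of random variables `{X β : β ∉ B}`. -/
noncomputable def genOutside {Ω ι : Type*} [MeasurableSpace Ω]
    (X : ι → Ω → ℝ) (B : Set ι) : MeasurableSpace Ω :=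
  MeasurableSpace.comap (fun ω => fun β : ((Set.univ \ B : Set ι)) => X β ω) inferInstance

/-! The Chen–Stein method bounds `∑ k, |P(Z = k) - P(W = k)|` by `a`: inserting the solution `f` of
the Stein equation for `h = 1_A` into the dependence structure bounds `|P(W ∈ A) - P(Z ∈ A)|` by
`(b₁ + b₂) sup |f (j + 1) - f j| + b₃ sup |f|`, with suprema at most `(1 - exp (-λ)) / λ` and
`min 1 (1.4 / √λ)`. Since `φ x = -x log x` satisfies `|φ x - φ y| ≤ φ |x - y|` whenever
`|x - y| ≤ 1 / 2`, Jensen's inequality over the `m + 1` possible values of `W` turns a distance `a`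
into an entropy difference of at most `a log ((m + 1) / a)`. What is left is the entropy carried by
the values of `Z` above `m`, which a Chernoff bound controls. -/

section NegMulLog

theorem negMulLog_one_sub_le_negMulLog {d : ℝ} (hd₀ : 0 ≤ d) (hd : d ≤ 1 / 2) :
    negMulLog (1 - d) ≤ negMulLog d := by
  rcases hd₀.eq_or_lt with rfl | hd₀
  · simp
  have hd₁ : 0 < 1 - d := by linarith
  have hweight : d / (1 - d) ≤ 1 := by rw [div_le_one hd₁]; linarith
  have hconcave := strictConcaveOn_log_Ioi.concaveOn.2 (Set.mem_Ioi.2 hd₀)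
    (Set.mem_Ioi.2 one_pos) (by positivity) (sub_nonneg.2 hweight) (add_sub_cancel _ _)
  have hmean : d / (1 - d) * d + (1 - d / (1 - d)) = 1 - d := by field_simp; ring
  simp only [smul_eq_mul, log_one, mul_zero, add_zero, mul_one, hmean] at hconcave
  rw [div_mul_eq_mul_div, div_le_iff₀ hd₁] at hconcave
  simp only [negMulLog]
  linarith

theorem negMulLog_add_le {x y : ℝ} (hx : 0 ≤ x) (hy : 0 ≤ y) :
    negMulLog (x + y) ≤ negMulLog x + negMulLog y := by
  rcases hx.eq_or_lt with rfl | hx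
  · simp
  rcases hy.eq_or_lt with rfl | hy
  · simp
  have hlogx : log x ≤ log (x + y) := log_le_log hx (by linarith)
  have hlogy : log y ≤ log (x + y) := log_le_log hy (by linarith)
  simp only [negMulLog]
  nlinarith

theorem negMulLog_le_negMulLog_add_add {x d : ℝ} (hx : 0 ≤ x) (hd : 0 ≤ d) (hxd : x + d ≤ 1) :
    negMulLog x ≤ negMulLog (x + d) + negMulLog (1 - d) := by
  rcases (show x ≤ 1 by linarith).eq_or_lt with rfl | hx₁
  · simp [show d = 0 by linarith]
  have hx₁' : 0 < 1 - x := by linarith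
  set t := d / (1 - x)
  have ht₀ : 0 ≤ t := by positivity
  have htd : t * (1 - x) = d := div_mul_cancel₀ d hx₁'.ne'
  have ht₁ : 0 ≤ 1 - t := by rw [sub_nonneg, div_le_one hx₁']; linarith
  -- `x + d` and `1 - d` are the two mirror-image points of the segment `[x, 1]`.
  have hleft := concaveOn_negMulLog.2 (Set.mem_Ici.2 hx) (Set.mem_Ici.2 zero_le_one) ht₁ ht₀
    (sub_add_cancel _ _)
  have hright := concaveOn_negMulLog.2 (Set.mem_Ici.2 hx) (Set.mem_Ici.2 zero_le_one) ht₀ ht₁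
    (add_sub_cancel _ _)
  simp only [smul_eq_mul, negMulLog_one, mul_zero, add_zero, mul_one] at hleft hright
  rw [show (1 - t) * x + t = x + d by linarith] at hleft
  rw [show t * x + (1 - t) = 1 - d by linarith] at hright
  linarith

theorem abs_negMulLog_sub_negMulLog_le {x y : ℝ} (hx : x ∈ Set.Icc 0 1) (hy : y ∈ Set.Icc 0 1)
    (hxy : |x - y| ≤ 1 / 2) : |negMulLog x - negMulLog y| ≤ negMulLog |x - y| := by
  wlog hle : y ≤ x generalizing x y
  · rw [abs_sub_comm, abs_sub_comm x]
    exact this hy hx (abs_sub_comm x y ▸ hxy) (le_of_not_ge hle)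
  obtain ⟨d, hd, rfl⟩ : ∃ d, 0 ≤ d ∧ x = y + d := ⟨x - y, by linarith, by ring⟩
  rw [add_sub_cancel_left, abs_of_nonneg hd] at hxy ⊢
  have hupper := negMulLog_add_le hy.1 hd
  have hlower := negMulLog_le_negMulLog_add_add hy.1 hd hx.2
  have hflip := negMulLog_one_sub_le_negMulLog hd hxy
  rw [abs_le]
  constructor <;> linarith

theorem monotoneOn_negMulLog : MonotoneOn negMulLog (Set.Icc 0 (exp (-1))) := by
  refine monotoneOn_of_deriv_nonneg (convex_Icc _ _) continuous_negMulLog.continuousOn ?_ ?_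
  · rw [interior_Icc]
    exact differentiableOn_negMulLog.mono fun x hx => hx.1.ne'
  · intro x hx
    rw [interior_Icc] at hx
    rw [deriv_negMulLog hx.1.ne']
    have := (log_le_iff_le_exp hx.1).2 hx.2.le
    linarith

variable {ι : Type*} {s : Finset ι}

theorem sum_negMulLog_le_card_mul {d : ι → ℝ} (hs : s.Nonempty) (hd : ∀ i ∈ s, 0 ≤ d i) :
    ∑ i ∈ s, negMulLog (d i) ≤ s.card * negMulLog ((∑ i ∈ s, d i) / s.card) := by
  have hcard : (0 : ℝ) < s.card := by exact_mod_cast hs.card_pos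
  have hjensen := concaveOn_negMulLog.le_map_sum (t := s) (w := fun _ => (s.card : ℝ)⁻¹) (p := d)
    (fun _ _ => by positivity) (by simp [hcard.ne']) hd
  simp only [smul_eq_mul, ← Finset.mul_sum] at hjensen
  rwa [inv_mul_le_iff₀ hcard, inv_mul_eq_div] at hjensen

theorem mul_negMulLog_div {a c : ℝ} (hc : c ≠ 0) : c * negMulLog (a / c) = a * log (c / a) := by
  rw [negMulLog, ← inv_div c a, log_inv]
  field_simp

theorem abs_sum_negMulLog_sub_sum_negMulLog_le {f g : ι → ℝ} {a : ℝ} (hs : s.Nontrivial)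
    (hf : ∀ i ∈ s, f i ∈ Set.Icc 0 1) (hg : ∀ i ∈ s, g i ∈ Set.Icc 0 1)
    (hfg : ∑ i ∈ s, |f i - g i| ≤ a) (ha : a ≤ 1 / 2) :
    |∑ i ∈ s, negMulLog (f i) - ∑ i ∈ s, negMulLog (g i)| ≤ a * log (s.card / a) := by
  have hcard : (2 : ℝ) ≤ s.card := by exact_mod_cast Finset.one_lt_card_iff_nontrivial.2 hs
  have hexp : (1 : ℝ) / 4 ≤ exp (-1) := by
    rw [exp_neg, ← one_div]
    exact one_div_le_one_div_of_le (exp_pos 1) (by linarith [exp_one_lt_three])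
  have hmean : a / s.card ≤ 1 / 4 := by
    rw [div_le_iff₀ (by linarith)]
    linarith
  have hsum₀ : 0 ≤ ∑ i ∈ s, |f i - g i| := Finset.sum_nonneg fun _ _ => abs_nonneg _
  have hterm : ∀ i ∈ s, |f i - g i| ≤ 1 / 2 := fun i hi =>
    (Finset.single_le_sum (f := fun i => |f i - g i|) (fun _ _ => abs_nonneg _) hi).trans
      (hfg.trans ha)
  calc |∑ i ∈ s, negMulLog (f i) - ∑ i ∈ s, negMulLog (g i)|
      ≤ ∑ i ∈ s, |negMulLog (f i) - negMulLog (g i)| := by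
        rw [← Finset.sum_sub_distrib]
        exact Finset.abs_sum_le_sum_abs _ _
    _ ≤ ∑ i ∈ s, negMulLog |f i - g i| := Finset.sum_le_sum fun i hi =>
        abs_negMulLog_sub_negMulLog_le (hf i hi) (hg i hi) (hterm i hi)
    _ ≤ s.card * negMulLog ((∑ i ∈ s, |f i - g i|) / s.card) :=
        sum_negMulLog_le_card_mul hs.nonempty fun _ _ => abs_nonneg _
    _ ≤ s.card * negMulLog (a / s.card) := by
        have hle : (∑ i ∈ s, |f i - g i|) / s.card ≤ a / s.card := by gcongr
        exact mul_le_mul_of_nonneg_left (monotoneOn_negMulLog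
          ⟨by positivity, by linarith⟩ ⟨by linarith [div_nonneg hsum₀ s.card.cast_nonneg],
            by linarith⟩ hle) (by linarith)
    _ = a * log (s.card / a) := mul_negMulLog_div (by linarith)

theorem mul_log_div_le_mul_log_div {a c d : ℝ} (ha : 0 ≤ a) (hc : 0 < c) (hcd : c ≤ d) :
    a * log (c / a) ≤ a * log (d / a) := by
  rcases ha.eq_or_lt with rfl | ha
  · simp
  · gcongr

end NegMulLog

local notation "Po" => (_root_.poissonPMF)

section Poisson

/-- The probability `P(Z < n)` for `Z ∼ Po(lam)`. -/
noncomputable def poissonHead (lam : ℝ) (n : ℕ) : ℝ := ∑ k ∈ Finset.range n, Po lam k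

/-- The probability `P(Z ≥ n)` for `Z ∼ Po(lam)`. -/
noncomputable def poissonTail (lam : ℝ) (n : ℕ) : ℝ := ∑' k, Po lam (k + n)

variable {lam : ℝ}

theorem poissonPMF_nonneg (hlam : 0 ≤ lam) (k : ℕ) : 0 ≤ Po lam k := by
  rw [_root_.poissonPMF]
  positivity

theorem poissonPMF_pos (hlam : 0 < lam) (k : ℕ) : 0 < Po lam k := by
  rw [_root_.poissonPMF]
  positivity

theorem poissonPMF_zero : Po lam 0 = exp (-lam) := by
  simp [_root_.poissonPMF]

theorem succ_mul_poissonPMF_succ (k : ℕ) : ((k : ℝ) + 1) * Po lam (k + 1) = lam * Po lam k := by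
  rw [_root_.poissonPMF, _root_.poissonPMF, Nat.factorial_succ]
  push_cast
  field_simp
  ring

theorem hasSum_poissonPMF (lam : ℝ) : HasSum (Po lam) 1 := by
  have hexp : HasSum (fun k : ℕ => lam ^ k / k.factorial) (exp lam) := by
    rw [exp_eq_exp_ℝ]
    exact NormedSpace.expSeries_div_hasSum_exp lam
  have hscaled := hexp.mul_left (exp (-lam))
  rw [← exp_add, neg_add_cancel, exp_zero] at hscaled
  exact hscaled.congr_fun fun k => by rw [_root_.poissonPMF, mul_div_assoc]

theorem hasSum_poissonTail (lam : ℝ) (n : ℕ) :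
    HasSum (fun k => Po lam (k + n)) (poissonTail lam n) :=
  ((summable_nat_add_iff n).2 (hasSum_poissonPMF lam).summable).hasSum

theorem poissonHead_add_poissonTail (lam : ℝ) (n : ℕ) :
    poissonHead lam n + poissonTail lam n = 1 := by
  rw [poissonHead, poissonTail, (hasSum_poissonPMF lam).summable.sum_add_tsum_nat_add,
    (hasSum_poissonPMF lam).tsum_eq]

theorem poissonHead_succ (lam : ℝ) (n : ℕ) :
    poissonHead lam (n + 1) = poissonHead lam n + Po lam n :=
  Finset.sum_range_succ _ _

theorem poissonTail_eq_add (lam : ℝ) (n : ℕ) :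
    poissonTail lam n = Po lam n + poissonTail lam (n + 1) := by
  linarith [poissonHead_add_poissonTail lam n, poissonHead_add_poissonTail lam (n + 1),
    poissonHead_succ lam n]

theorem poissonHead_nonneg (hlam : 0 ≤ lam) (n : ℕ) : 0 ≤ poissonHead lam n :=
  Finset.sum_nonneg fun k _ => poissonPMF_nonneg hlam k

theorem poissonTail_nonneg (hlam : 0 ≤ lam) (n : ℕ) : 0 ≤ poissonTail lam n :=
  tsum_nonneg fun _ => poissonPMF_nonneg hlam _

theorem poissonPMF_le_one (hlam : 0 ≤ lam) (k : ℕ) : Po lam k ≤ 1 := by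
  linarith [poissonHead_add_poissonTail lam (k + 1), poissonHead_succ lam k,
    poissonHead_nonneg hlam k, poissonTail_nonneg hlam (k + 1)]

theorem poissonPMF_mul_succ_le (hlam : 0 ≤ lam) {k n : ℕ} (hkn : k ≤ n) :
    Po lam k * Po lam (n + 1) ≤ Po lam (k + 1) * Po lam n := by
  have hk : Po lam (k + 1) = lam * Po lam k / (k + 1) := by
    rw [eq_div_iff (by positivity), mul_comm, succ_mul_poissonPMF_succ]
  have hn : Po lam (n + 1) = lam * Po lam n / (n + 1) := by
    rw [eq_div_iff (by positivity), mul_comm, succ_mul_poissonPMF_succ]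
  have hqk := poissonPMF_nonneg hlam k
  have hqn := poissonPMF_nonneg hlam n
  calc Po lam k * Po lam (n + 1) = lam * Po lam k * Po lam n / (n + 1) := by rw [hn]; ring
    _ ≤ lam * Po lam k * Po lam n / (k + 1) := by gcongr
    _ = Po lam (k + 1) * Po lam n := by rw [hk]; ring

theorem poissonHead_mul_poissonPMF_le (hlam : 0 ≤ lam) (n : ℕ) :
    poissonHead lam (n + 1) * Po lam (n + 1)
      ≤ Po lam n * (poissonHead lam (n + 2) - Po lam 0) := by
  have hshift : poissonHead lam (n + 2) - Po lam 0
      = ∑ k ∈ Finset.range (n + 1), Po lam (k + 1) := by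
    rw [poissonHead, Finset.sum_range_succ', add_sub_cancel_right]
  rw [hshift, poissonHead, Finset.sum_mul, Finset.mul_sum]
  refine Finset.sum_le_sum fun k hk => ?_
  rw [mul_comm (Po lam n)]
  exact poissonPMF_mul_succ_le hlam (Nat.lt_succ_iff.1 (Finset.mem_range.1 hk))

theorem poissonTail_mul_poissonPMF_le (hlam : 0 ≤ lam) (n : ℕ) :
    poissonTail lam (n + 2) * Po lam n ≤ poissonTail lam (n + 1) * Po lam (n + 1) := by
  refine hasSum_le (fun k => ?_) ((hasSum_poissonTail lam (n + 2)).mul_right _)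
    ((hasSum_poissonTail lam (n + 1)).mul_right _)
  have hratio := poissonPMF_mul_succ_le hlam (show n ≤ k + (n + 1) by omega)
  rw [mul_comm, mul_comm (Po lam (k + (n + 1)))]
  exact hratio

theorem sub_mul_poissonHead_le (hlam : 0 ≤ lam) (n : ℕ) :
    (lam - n) * poissonHead lam (n + 1) ≤ lam * Po lam n := by
  induction n with
  | zero => simp [poissonHead]
  | succ n ih =>
    have hrec := succ_mul_poissonPMF_succ (lam := lam) n
    have hhead := poissonHead_nonneg hlam (n + 1)
    rw [poissonHead_succ]
    push_cast
    linarith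

theorem sub_mul_poissonTail_le (hlam : 0 ≤ lam) (n : ℕ) :
    (n + 1 - lam) * poissonTail lam (n + 1) ≤ lam * Po lam n := by
  have hmean : ((n : ℝ) + 1) * poissonTail lam (n + 1) ≤ lam * poissonTail lam n := by
    refine hasSum_le (fun k => ?_) ((hasSum_poissonTail lam (n + 1)).mul_left _)
      ((hasSum_poissonTail lam n).mul_left _)
    rw [← succ_mul_poissonPMF_succ, show k + (n + 1) = k + n + 1 by ring]
    have hq := poissonPMF_nonneg hlam (k + n + 1)
    gcongr
    simp
  rw [poissonTail_eq_add lam n] at hmean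
  linarith

theorem poissonHead_mul_poissonTail_le (hlam : 0 ≤ lam) (n : ℕ) :
    poissonHead lam (n + 1) * poissonTail lam (n + 1) ≤ lam * Po lam n := by
  have hH := poissonHead_nonneg hlam (n + 1)
  have hT := poissonTail_nonneg hlam (n + 1)
  calc poissonHead lam (n + 1) * poissonTail lam (n + 1)
      = (lam - n) * poissonHead lam (n + 1) * poissonTail lam (n + 1)
        + (n + 1 - lam) * poissonTail lam (n + 1) * poissonHead lam (n + 1) := by ring
    _ ≤ lam * Po lam n * poissonTail lam (n + 1) + lam * Po lam n * poissonHead lam (n + 1) := by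
        exact add_le_add (mul_le_mul_of_nonneg_right (sub_mul_poissonHead_le hlam n) hT)
          (mul_le_mul_of_nonneg_right (sub_mul_poissonTail_le hlam n) hH)
    _ = lam * Po lam n := by
        rw [← mul_add, add_comm, poissonHead_add_poissonTail, mul_one]

theorem factorial_le_exp_one_mul_sqrt_mul_pow {n : ℕ} (hn : n ≠ 0) :
    (n.factorial : ℝ) ≤ exp 1 * √n * (n / exp 1) ^ n := by
  obtain ⟨m, rfl⟩ := Nat.exists_eq_add_one_of_ne_zero hn
  have hseq : Stirling.stirlingSeq (m + 1) ≤ Stirling.stirlingSeq 1 :=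
    Stirling.stirlingSeq'_antitone m.zero_le
  rw [Stirling.stirlingSeq_one, Stirling.stirlingSeq, div_le_div_iff₀ (by positivity)
    (by positivity), sqrt_mul zero_le_two] at hseq
  refine le_of_mul_le_mul_right ?_ (sqrt_pos.2 zero_lt_two)
  linarith

theorem exp_neg_sq_div_le_exp_neg_mul_pow_div (hlam : 0 < lam) {n : ℕ} (hn : n ≠ 0) :
    exp (-((n - lam) ^ 2 / lam)) ≤ exp (-lam) * lam ^ n / (n / exp 1) ^ n := by
  have hn₀ : (0 : ℝ) < n := by positivity
  have hratio : lam ^ n / (n / exp 1) ^ n = exp (n * (log (lam / n) + 1)) := by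
    rw [← div_pow, mul_comm (n : ℝ), exp_mul, exp_add, exp_log (div_pos hlam hn₀), rpow_natCast]
    congr 1
    field_simp
  rw [mul_div_assoc, hratio, ← exp_add, exp_le_exp]
  calc -((n - lam) ^ 2 / lam) = -lam + n * (1 - (lam / n)⁻¹ + 1) := by field_simp; ring
    _ ≤ -lam + n * (log (lam / n) + 1) := by
        gcongr
        exact one_sub_inv_le_log_of_pos (div_pos hlam hn₀)

theorem exp_neg_sq_div_le_mul_poissonPMF (hlam : 0 < lam) {n : ℕ} (hn : n ≠ 0) :
    exp (-((n - lam) ^ 2 / lam)) ≤ exp 1 * √n * Po lam n := by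
  refine (exp_neg_sq_div_le_exp_neg_mul_pow_div hlam hn).trans ?_
  rw [_root_.poissonPMF, ← mul_div_assoc, div_le_div_iff₀ (by positivity) (by positivity)]
  calc exp (-lam) * lam ^ n * n.factorial
      ≤ exp (-lam) * lam ^ n * (exp 1 * √n * (n / exp 1) ^ n) := by
        gcongr
        exact factorial_le_exp_one_mul_sqrt_mul_pow hn
    _ = exp 1 * √n * (exp (-lam) * lam ^ n) * (n / exp 1) ^ n := by ring

theorem one_div_four_le_sqrt_mul_poissonPMF (hlam : 7 / 5 ≤ √lam) {n : ℕ}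
    (hlower : lam - n ≤ 5 / 7 * √lam) (hupper : n + 1 - lam ≤ 5 / 7 * √lam) :
    1 / 4 ≤ 7 / 5 * √lam * Po lam n := by
  have hlam₀ : 0 < lam := sqrt_pos.1 (by linarith)
  have hsq : √lam * √lam = lam := mul_self_sqrt hlam₀.le
  have hn : n ≠ 0 := by
    rintro rfl
    norm_num at hlower
    nlinarith
  have hexponent : (n - lam) ^ 2 / lam ≤ 25 / 49 := by
    rw [div_le_iff₀ hlam₀]
    nlinarith
  have hexp : (27 : ℝ) / 50 ≤ exp (-((n - lam) ^ 2 / lam)) := by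
    have hhalf : (73 : ℝ) / 98 ≤ exp (-(25 / 98)) := by
      linarith [add_one_le_exp (-(25 / 98 : ℝ))]
    calc (27 : ℝ) / 50 ≤ 73 / 98 * (73 / 98) := by norm_num
      _ ≤ exp (-(25 / 98)) * exp (-(25 / 98)) := by gcongr
      _ = exp (-(25 / 49)) := by rw [← exp_add]; norm_num
      _ ≤ exp (-((n - lam) ^ 2 / lam)) := by gcongr
  have hsqrt : √n ≤ 107 / 100 * √lam := by
    rw [sqrt_le_left (by positivity)]
    nlinarith [sq_nonneg (√lam - 2.5)]
  have hq := poissonPMF_pos hlam₀ n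
  have hstirling : (27 : ℝ) / 50 ≤ 2.7182818286 * (107 / 100 * √lam) * Po lam n :=
    calc (27 : ℝ) / 50 ≤ exp 1 * √n * Po lam n :=
          hexp.trans (exp_neg_sq_div_le_mul_poissonPMF hlam₀ hn)
      _ ≤ 2.7182818286 * (107 / 100 * √lam) * Po lam n := by
          gcongr
          exact exp_one_lt_d9.le
  linarith

/- Away from the mean one of the two factors is small by the Mills-type bounds above; near the mean
the product is at most `1 / 4`, which Stirling's formula compares with `Po(lam)(n)`. -/
theorem poissonHead_mul_poissonTail_le_sqrt (hlam : 0 < lam) (n : ℕ) :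
    poissonHead lam (n + 1) * poissonTail lam (n + 1) ≤ 7 / 5 * √lam * Po lam n := by
  have hsqrt : 0 < √lam := sqrt_pos.2 hlam
  have hsq : √lam * √lam = lam := mul_self_sqrt hlam.le
  have hH := poissonHead_nonneg hlam.le (n + 1)
  have hT := poissonTail_nonneg hlam.le (n + 1)
  have hHT := poissonHead_add_poissonTail lam (n + 1)
  have hq := poissonPMF_pos hlam n
  have mills {d x : ℝ} (hd : 5 / 7 * √lam ≤ d) (hx : 0 ≤ x) (hdx : d * x ≤ lam * Po lam n) :
      x ≤ 7 / 5 * √lam * Po lam n := by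
    have hscaled : 5 / 7 * √lam * x ≤ √lam * √lam * Po lam n := by
      rw [hsq]
      exact (mul_le_mul_of_nonneg_right hd hx).trans hdx
    nlinarith
  rcases le_total (√lam) (7 / 5) with hsmall | hlarge
  · refine (poissonHead_mul_poissonTail_le hlam.le n).trans ?_
    calc lam * Po lam n = √lam * √lam * Po lam n := by rw [hsq]
      _ ≤ 7 / 5 * √lam * Po lam n := by gcongr
  rcases le_total (5 / 7 * √lam) (lam - n) with hleft | hleft
  · have := mills hleft hH (sub_mul_poissonHead_le hlam.le n)
    nlinarith
  rcases le_total (5 / 7 * √lam) (n + 1 - lam) with hright | hright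
  · have := mills hright hT (sub_mul_poissonTail_le hlam.le n)
    nlinarith
  have hcentral := one_div_four_le_sqrt_mul_poissonPMF hlarge hleft hright
  nlinarith [sq_nonneg (poissonHead lam (n + 1) - 1 / 2)]

end Poisson

section PoissonEntropy

variable {lam : ℝ}

theorem poissonTail_le_one (hlam : 0 ≤ lam) (n : ℕ) : poissonTail lam n ≤ 1 := by
  linarith [poissonHead_add_poissonTail lam n, poissonHead_nonneg hlam n]

theorem poissonTail_succ_le (hlam : 0 ≤ lam) (n : ℕ) :
    poissonTail lam (n + 1) ≤ poissonTail lam n := by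
  linarith [poissonTail_eq_add lam n, poissonPMF_nonneg hlam n]

-- Raising the mean to `n` multiplies each term of the tail by at least `exp (lam - n) (n / lam)ⁿ`.
theorem poissonTail_le_exp_mul_pow (hlam : 0 < lam) {n : ℕ} (hn : lam ≤ n) :
    poissonTail lam n ≤ exp (n - lam) * (lam / n) ^ n := by
  have hn₀ : (0 : ℝ) < n := hlam.trans_le hn
  have hterm : ∀ k, Po lam (k + n) ≤ exp (n - lam) * (lam / n) ^ n * Po n (k + n) := fun k =>
    calc Po lam (k + n) = exp (-lam) * (lam ^ k * lam ^ n) / (k + n).factorial := by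
          rw [_root_.poissonPMF, pow_add]
      _ ≤ exp (-lam) * ((n : ℝ) ^ k * lam ^ n) / (k + n).factorial := by gcongr
      _ = exp (n - lam) * (lam / n) ^ n * Po n (k + n) := by
          rw [_root_.poissonPMF, sub_eq_neg_add, exp_add, exp_neg (n : ℝ), pow_add, div_pow]
          field_simp
  calc poissonTail lam n ≤ exp (n - lam) * (lam / n) ^ n * poissonTail n n :=
        hasSum_le hterm (hasSum_poissonTail lam n) ((hasSum_poissonTail n n).mul_left _)
    _ ≤ exp (n - lam) * (lam / n) ^ n :=
        mul_le_of_le_one_right (by positivity) (poissonTail_le_one hn₀.le n)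

theorem poissonTail_le_exp (hlam : 0 < lam) {n : ℕ} (hn : lam ≤ n) :
    poissonTail lam n ≤ exp (-(lam + n * log (n / (lam * exp 1)))) := by
  have hn₀ : (0 : ℝ) < n := hlam.trans_le hn
  refine (poissonTail_le_exp_mul_pow hlam hn).trans_eq ?_
  rw [← exp_log (div_pos hlam hn₀), ← exp_nat_mul, ← exp_add, ← div_div,
    log_div (by positivity) (exp_pos 1).ne', log_exp, ← inv_div, log_inv]
  ring_nf

theorem log_factorial_add_two_le (k : ℕ) :
    log (k + 2).factorial ≤ (k + 2) * (k + 1) / 2 := by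
  induction k with
  | zero => simpa using log_two_lt_d9.le.trans (by norm_num)
  | succ k ih =>
    have hlog := log_le_sub_one_of_pos (show (0 : ℝ) < k + 3 by positivity)
    rw [show k + 1 + 2 = k + 2 + 1 by ring, Nat.factorial_succ, Nat.cast_mul,
      log_mul (by positivity) (by positivity)]
    push_cast
    rw [show (k : ℝ) + 2 + 1 = k + 3 by ring]
    linarith

theorem negMulLog_poissonPMF_add_two_le (hlam : 0 < lam) (k : ℕ) :
    negMulLog (Po lam (k + 2))
      ≤ lam * Po lam (k + 2) - lam * log lam * Po lam (k + 1) + lam ^ 2 / 2 * Po lam k := by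
  have hq := poissonPMF_nonneg hlam.le (k + 2)
  have hrec : ((k : ℝ) + 2) * Po lam (k + 2) = lam * Po lam (k + 1) := by
    have := succ_mul_poissonPMF_succ (lam := lam) (k + 1)
    push_cast at this
    linarith
  have hrec₂ : ((k : ℝ) + 2) * (k + 1) * Po lam (k + 2) = lam ^ 2 * Po lam k := by
    have := succ_mul_poissonPMF_succ (lam := lam) k
    linear_combination (k + 1) * hrec + lam * this
  have hlog : log (Po lam (k + 2)) = -lam + (k + 2) * log lam - log (k + 2).factorial := by
    rw [_root_.poissonPMF, log_div (by positivity) (by positivity),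
      log_mul (by positivity) (by positivity), log_exp, log_pow]
    push_cast
    ring
  calc negMulLog (Po lam (k + 2))
      = lam * Po lam (k + 2) - log lam * (((k : ℝ) + 2) * Po lam (k + 2))
          + log (k + 2).factorial * Po lam (k + 2) := by rw [negMulLog, hlog]; ring
    _ ≤ lam * Po lam (k + 2) - log lam * (((k : ℝ) + 2) * Po lam (k + 2))
          + (k + 2) * (k + 1) / 2 * Po lam (k + 2) := by
        gcongr
        exact log_factorial_add_two_le k
    _ = _ := by linear_combination (1 / 2 : ℝ) * hrec₂ - log lam * hrec

theorem summable_negMulLog_poissonPMF (hlam : 0 < lam) :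
    Summable fun k => negMulLog (Po lam k) := by
  have hsum (n : ℕ) := (hasSum_poissonTail lam n).summable
  refine (summable_nat_add_iff 2).1 (.of_nonneg_of_le (fun k => ?_)
    (negMulLog_poissonPMF_add_two_le hlam)
    ((((hsum 2).mul_left _).sub ((hsum 1).mul_left _)).add ((hsum 0).mul_left _)))
  exact negMulLog_nonneg (poissonPMF_nonneg hlam.le _) (poissonPMF_le_one hlam.le _)

theorem tsum_negMulLog_poissonPMF_le (hlam : 0 < lam) (n : ℕ) :
    ∑' k, negMulLog (Po lam (k + (n + 2)))
      ≤ (max (lam * log (exp 1 / lam)) 0 + lam ^ 2 / 2) * poissonTail lam n := by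
  have hT₁ := poissonTail_succ_le hlam.le n
  have hT₂ := poissonTail_succ_le hlam.le (n + 1)
  have hT := poissonTail_nonneg hlam.le (n + 1)
  have hlog : log (exp 1 / lam) = 1 - log lam := by
    rw [log_div (exp_pos 1).ne' hlam.ne', log_exp]
  calc ∑' k, negMulLog (Po lam (k + (n + 2)))
      ≤ lam * poissonTail lam (n + 2) - lam * log lam * poissonTail lam (n + 1)
          + lam ^ 2 / 2 * poissonTail lam n :=
        hasSum_le (fun k => negMulLog_poissonPMF_add_two_le hlam (k + n))
          ((summable_nat_add_iff (n + 2)).2 (summable_negMulLog_poissonPMF hlam)).hasSum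
          ((((hasSum_poissonTail lam (n + 2)).mul_left _).sub
            ((hasSum_poissonTail lam (n + 1)).mul_left _)).add
            ((hasSum_poissonTail lam n).mul_left _))
    _ ≤ lam * poissonTail lam (n + 1) - lam * log lam * poissonTail lam (n + 1)
          + lam ^ 2 / 2 * poissonTail lam n := by gcongr
    _ = lam * log (exp 1 / lam) * poissonTail lam (n + 1) + lam ^ 2 / 2 * poissonTail lam n := by
        rw [hlog]; ring
    _ ≤ max (lam * log (exp 1 / lam)) 0 * poissonTail lam n + lam ^ 2 / 2 * poissonTail lam n := by
        gcongr
        exact le_max_left _ _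
    _ = _ := by ring

theorem abs_entropyPMF_poissonPMF_sub_le {P : ℕ → ℝ} {n : ℕ} {a : ℝ} (hlam : 0 < lam)
    (hn : lam ≤ n) (hP : ∀ k, P k ∈ Set.Icc 0 1) (hP₀ : ∀ k, n + 2 ≤ k → P k = 0)
    (hdist : ∑ k ∈ Finset.range (n + 2), |Po lam k - P k| ≤ a) (ha : a ≤ 1 / 2) :
    |entropyPMF (Po lam) - entropyPMF P| ≤ a * log ((n + 2) / a)
      + (max (lam * log (exp 1 / lam)) 0 + lam ^ 2 / 2)
        * exp (-(lam + n * log (n / (lam * exp 1)))) := by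
  have hPo : ∀ k, Po lam k ∈ Set.Icc 0 1 := fun k =>
    ⟨poissonPMF_nonneg hlam.le k, poissonPMF_le_one hlam.le k⟩
  have hhead := abs_sum_negMulLog_sub_sum_negMulLog_le
    (Finset.one_lt_card_iff_nontrivial.1 (by simp)) (fun k _ => hPo k) (fun k _ => hP k) hdist ha
  have htail₀ : 0 ≤ ∑' k, negMulLog (Po lam (k + (n + 2))) :=
    tsum_nonneg fun _ => negMulLog_nonneg (hPo _).1 (hPo _).2
  have htail := (tsum_negMulLog_poissonPMF_le hlam n).trans
    (mul_le_mul_of_nonneg_left (poissonTail_le_exp hlam hn) (by positivity))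
  have hentropyPo : ∑ k ∈ Finset.range (n + 2), negMulLog (Po lam k)
      + ∑' k, negMulLog (Po lam (k + (n + 2))) = entropyPMF (Po lam) :=
    (summable_negMulLog_poissonPMF hlam).sum_add_tsum_nat_add _
  have hentropyP : entropyPMF P = ∑ k ∈ Finset.range (n + 2), negMulLog (P k) :=
    tsum_eq_sum fun k hk => by rw [hP₀ k (by simpa using hk), negMulLog_zero]
  rw [Finset.card_range] at hhead
  push_cast at hhead
  rw [hentropyP, ← hentropyPo, add_sub_right_comm]
  exact (abs_add_le _ _).trans (add_le_add hhead ((abs_of_nonneg htail₀).trans_le htail))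

end PoissonEntropy

section SteinEquation

/-- The expectation `E h(Z)` for `Z ∼ Po(lam)`. -/
noncomputable def poissonExpectation (lam : ℝ) (h : ℕ → ℝ) : ℝ := ∑' k, h k * Po lam k

/-- The numerator `∑_{k < j} (h k - E h(Z)) P(Z = k)` of the solution of the Stein equation. -/
noncomputable def steinNumerator (lam : ℝ) (h : ℕ → ℝ) (j : ℕ) : ℝ :=
  ∑ k ∈ Finset.range j, (h k - poissonExpectation lam h) * Po lam k

/-- The solution `f` of the Stein equation `lam * f (j + 1) - j * f j = h j - E h(Z)` for
`Z ∼ Po(lam)`. Division by zero makes its irrelevant value at `j = 0` equal to `0`. -/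
noncomputable def steinSolution (lam : ℝ) (h : ℕ → ℝ) (j : ℕ) : ℝ :=
  steinNumerator lam h j / (j * Po lam j)

variable {lam : ℝ} {h : ℕ → ℝ}

theorem steinSolution_zero : steinSolution lam h 0 = 0 := by simp [steinSolution]

theorem steinSolution_succ (j : ℕ) :
    steinSolution lam h (j + 1) = steinNumerator lam h (j + 1) / (lam * Po lam j) := by
  rw [steinSolution, ← succ_mul_poissonPMF_succ, Nat.cast_succ]

theorem steinSolution_stein_equation (hlam : 0 < lam) (j : ℕ) :
    lam * steinSolution lam h (j + 1) - j * steinSolution lam h j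
      = h j - poissonExpectation lam h := by
  have hq := (poissonPMF_pos hlam j).ne'
  have hsucc : lam * steinSolution lam h (j + 1) = steinNumerator lam h (j + 1) / Po lam j := by
    rw [steinSolution_succ]
    field_simp
  have hself : j * steinSolution lam h j = steinNumerator lam h j / Po lam j := by
    rcases eq_or_ne j 0 with rfl | hj
    · simp [steinNumerator]
    · rw [steinSolution]
      field_simp
  rw [hsucc, hself, ← sub_div, div_eq_iff hq, steinNumerator, Finset.sum_range_succ,
    ← steinNumerator, add_sub_cancel_left]

theorem summable_mul_poissonPMF (hlam : 0 ≤ lam) (hh : ∀ k, h k ∈ Set.Icc 0 1) :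
    Summable fun k => h k * Po lam k :=
  (hasSum_poissonPMF lam).summable.of_nonneg_of_le
    (fun k => mul_nonneg (hh k).1 (poissonPMF_nonneg hlam k))
    fun k => mul_le_of_le_one_left (poissonPMF_nonneg hlam k) (hh k).2

theorem tsum_mul_poissonPMF_mem_Icc (hlam : 0 ≤ lam) (hh : ∀ k, h k ∈ Set.Icc 0 1) (n : ℕ) :
    ∑' k, h (k + n) * Po lam (k + n) ∈ Set.Icc 0 (poissonTail lam n) :=
  ⟨tsum_nonneg fun _ => mul_nonneg (hh _).1 (poissonPMF_nonneg hlam _),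
    ((summable_nat_add_iff n).2 (summable_mul_poissonPMF hlam hh)).tsum_le_tsum
      (fun _ => mul_le_of_le_one_left (poissonPMF_nonneg hlam _) (hh _).2)
      (hasSum_poissonTail lam n).summable⟩

theorem sum_mul_poissonPMF_mem_Icc (hlam : 0 ≤ lam) (hh : ∀ k, h k ∈ Set.Icc 0 1) (n : ℕ) :
    ∑ k ∈ Finset.range n, h k * Po lam k ∈ Set.Icc 0 (poissonHead lam n) :=
  ⟨Finset.sum_nonneg fun _ _ => mul_nonneg (hh _).1 (poissonPMF_nonneg hlam _),
    Finset.sum_le_sum fun _ _ => mul_le_of_le_one_left (poissonPMF_nonneg hlam _) (hh _).2⟩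

theorem steinNumerator_eq (hlam : 0 ≤ lam) (hh : ∀ k, h k ∈ Set.Icc 0 1) (n : ℕ) :
    steinNumerator lam h n = (∑ k ∈ Finset.range n, h k * Po lam k) * poissonTail lam n
      - (∑' k, h (k + n) * Po lam (k + n)) * poissonHead lam n := by
  have hsplit : (∑ k ∈ Finset.range n, h k * Po lam k) + ∑' k, h (k + n) * Po lam (k + n)
      = poissonExpectation lam h := (summable_mul_poissonPMF hlam hh).sum_add_tsum_nat_add n
  simp only [steinNumerator, sub_mul, Finset.sum_sub_distrib, ← Finset.mul_sum]
  rw [← poissonHead, ← hsplit, eq_sub_of_add_eq' (poissonHead_add_poissonTail lam n)]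
  ring

theorem abs_steinNumerator_le (hlam : 0 ≤ lam) (hh : ∀ k, h k ∈ Set.Icc 0 1) (n : ℕ) :
    |steinNumerator lam h n| ≤ poissonHead lam n * poissonTail lam n := by
  have hhead := sum_mul_poissonPMF_mem_Icc hlam hh n
  have htail := tsum_mul_poissonPMF_mem_Icc hlam hh n
  have hH := poissonHead_nonneg hlam n
  have hT := poissonTail_nonneg hlam n
  rw [steinNumerator_eq hlam hh, mul_comm (poissonHead lam n)]
  exact abs_sub_le_of_nonneg_of_le (mul_nonneg hhead.1 hT)
    (by rw [mul_comm]; exact mul_le_mul_of_nonneg_left hhead.2 hT)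
    (mul_nonneg htail.1 hH) (mul_le_mul_of_nonneg_right htail.2 hH)

theorem abs_steinSolution_le (hlam : 0 < lam) (hh : ∀ k, h k ∈ Set.Icc 0 1) (j : ℕ) :
    |steinSolution lam h j| ≤ min 1 (1.4 / √lam) := by
  cases j with
  | zero =>
    rw [steinSolution_zero, abs_zero]
    positivity
  | succ n =>
    have hq := poissonPMF_pos hlam n
    have hnum := abs_steinNumerator_le hlam.le hh (n + 1)
    have hsqrt : 0 < √lam := sqrt_pos.2 hlam
    rw [steinSolution_succ, abs_div, abs_of_pos (mul_pos hlam hq)]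
    refine le_min (div_le_one_of_le₀ (hnum.trans (poissonHead_mul_poissonTail_le hlam.le n))
      (by positivity)) ?_
    rw [div_le_div_iff₀ (by positivity) hsqrt]
    calc |steinNumerator lam h (n + 1)| * √lam
        ≤ 7 / 5 * √lam * Po lam n * √lam := by
          gcongr
          exact hnum.trans (poissonHead_mul_poissonTail_le_sqrt hlam n)
      _ = 1.4 * (√lam * √lam * Po lam n) := by ring
      _ = 1.4 * (lam * Po lam n) := by rw [mul_self_sqrt hlam.le]

theorem steinNumerator_mul_sub_le (hlam : 0 ≤ lam) (hh : ∀ k, h k ∈ Set.Icc 0 1) (n : ℕ) :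
    steinNumerator lam h (n + 2) * Po lam n - steinNumerator lam h (n + 1) * Po lam (n + 1)
      ≤ Po lam (n + 1) * Po lam n * (1 - exp (-lam)) := by
  have hu := (sum_mul_poissonPMF_mem_Icc hlam hh (n + 1)).1
  have hv := (tsum_mul_poissonPMF_mem_Icc hlam hh (n + 2)).1
  have hheadSum := Finset.sum_range_succ (fun k => h k * Po lam k) (n + 1)
  have htailSum := ((summable_nat_add_iff (n + 1)).2
    (summable_mul_poissonPMF hlam hh)).tsum_eq_zero_add
  simp only [zero_add, add_right_comm _ 1 (n + 1), add_assoc _ (n + 1) 1] at htailSum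
  rw [steinNumerator_eq hlam hh, steinNumerator_eq hlam hh, hheadSum, htailSum]
  set u := ∑ k ∈ Finset.range (n + 1), h k * Po lam k
  set v := ∑' k, h (k + (n + 2)) * Po lam (k + (n + 2))
  have hq₀ := poissonPMF_nonneg hlam n
  have hq₁ := poissonPMF_nonneg hlam (n + 1)
  have hhead := poissonHead_mul_poissonPMF_le hlam n
  rw [poissonPMF_zero] at hhead
  have hbelow : 0 ≤ u * (poissonTail lam (n + 1) * Po lam (n + 1)
      - poissonTail lam (n + 2) * Po lam n) :=
    mul_nonneg hu (sub_nonneg.2 (poissonTail_mul_poissonPMF_le hlam n))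
  have habove : 0 ≤ v * (poissonHead lam (n + 2) * Po lam n
      - poissonHead lam (n + 1) * Po lam (n + 1)) :=
    mul_nonneg hv (by nlinarith [exp_pos (-lam)])
  -- The values of `h` below and above `n + 1` contribute with a favourable sign.
  calc ((u + h (n + 1) * Po lam (n + 1)) * poissonTail lam (n + 2)
          - v * poissonHead lam (n + 2)) * Po lam n
        - (u * poissonTail lam (n + 1)
          - (h (n + 1) * Po lam (n + 1) + v) * poissonHead lam (n + 1)) * Po lam (n + 1)
      ≤ h (n + 1) * Po lam (n + 1) * (poissonTail lam (n + 2) * Po lam n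
          + poissonHead lam (n + 1) * Po lam (n + 1)) := by linarith
    _ ≤ 1 * Po lam (n + 1) * (poissonTail lam (n + 2) * Po lam n
          + Po lam n * (poissonHead lam (n + 2) - exp (-lam))) := by
        have hT := poissonTail_nonneg hlam (n + 2)
        have hH := poissonHead_nonneg hlam (n + 1)
        gcongr
        exact (hh _).2
    _ = Po lam (n + 1) * Po lam n * (1 - exp (-lam)) := by
        rw [eq_sub_of_add_eq' (poissonHead_add_poissonTail lam (n + 2))]
        ring

theorem steinSolution_sub_le (hlam : 0 < lam) (hh : ∀ k, h k ∈ Set.Icc 0 1) (n : ℕ) :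
    steinSolution lam h (n + 2) - steinSolution lam h (n + 1) ≤ (1 - exp (-lam)) / lam := by
  have hq₀ := poissonPMF_pos hlam n
  have hq₁ := poissonPMF_pos hlam (n + 1)
  calc steinSolution lam h (n + 2) - steinSolution lam h (n + 1)
      = (steinNumerator lam h (n + 2) * Po lam n - steinNumerator lam h (n + 1) * Po lam (n + 1))
          / (Po lam (n + 1) * Po lam n * lam) := by
        rw [steinSolution_succ, steinSolution_succ]
        field_simp
    _ ≤ Po lam (n + 1) * Po lam n * (1 - exp (-lam)) / (Po lam (n + 1) * Po lam n * lam) := by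
        gcongr
        exact steinNumerator_mul_sub_le hlam.le hh n
    _ = (1 - exp (-lam)) / lam := mul_div_mul_left _ _ (by positivity)

theorem steinSolution_one_sub (hlam : 0 ≤ lam) (hh : ∀ k, h k ∈ Set.Icc 0 1) (j : ℕ) :
    steinSolution lam (fun k => 1 - h k) j = -steinSolution lam h j := by
  have hexpectation : poissonExpectation lam (fun k => 1 - h k) = 1 - poissonExpectation lam h := by
    simp only [poissonExpectation, sub_mul, one_mul]
    rw [(hasSum_poissonPMF lam).summable.tsum_sub (summable_mul_poissonPMF hlam hh),
      (hasSum_poissonPMF lam).tsum_eq]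
  simp only [steinSolution, steinNumerator, hexpectation, sub_sub_sub_cancel_left]
  rw [← neg_div, ← Finset.sum_neg_distrib]
  simp only [← neg_mul, neg_sub]

theorem abs_steinSolution_sub_le (hlam : 0 < lam) (hh : ∀ k, h k ∈ Set.Icc 0 1) (n : ℕ) :
    |steinSolution lam h (n + 2) - steinSolution lam h (n + 1)| ≤ (1 - exp (-lam)) / lam := by
  have hcompl := steinSolution_sub_le hlam (h := fun k => 1 - h k)
    (fun k => ⟨sub_nonneg.2 (hh k).2, sub_le_self _ (hh k).1⟩) n
  simp only [steinSolution_one_sub hlam.le hh] at hcompl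
  exact abs_le.2 ⟨by linarith, steinSolution_sub_le hlam hh n⟩

end SteinEquation

section ChenStein

/-- The Chen–Stein coefficient `b₁ = ∑_α ∑_{β ∈ B α} p_α p_β`. -/
noncomputable def chenSteinB₁ {ι : Type*} [Fintype ι] (p : ι → ℝ) (B : ι → Finset ι) : ℝ :=
  ∑ α, ∑ β ∈ B α, p α * p β

/-- The Chen–Stein coefficient `b₂ = ∑_α ∑_{β ∈ B α, β ≠ α} E[X_α X_β]`. -/
noncomputable def chenSteinB₂ {Ω ι : Type*} [MeasurableSpace Ω] [Fintype ι] [DecidableEq ι]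
    (μ : Measure Ω) (X : ι → Ω → ℝ) (B : ι → Finset ι) : ℝ :=
  ∑ α, ∑ β ∈ B α \ {α}, ∫ ω, X α ω * X β ω ∂μ

/-- The Chen–Stein coefficient `b₃ = ∑_α E|E[X_α - p_α | σ(X_β : β ∉ B α)]|`. -/
noncomputable def chenSteinB₃ {Ω ι : Type*} [MeasurableSpace Ω] [Fintype ι]
    (μ : Measure Ω) (X : ι → Ω → ℝ) (p : ι → ℝ) (B : ι → Finset ι) : ℝ :=
  ∑ α, ∫ ω, |(μ[(fun ω' => X α ω' - p α) | genOutside X (↑(B α) : Set ι)]) ω| ∂μ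

theorem sum_abs_sub_le_two_mul {ι : Type*} {s : Finset ι} {f g : ι → ℝ} {ε : ℝ}
    (hsum : ∑ i ∈ s, f i ≤ ∑ i ∈ s, g i)
    (hε : ∀ A ⊆ s, ∑ i ∈ A, g i - ∑ i ∈ A, f i ≤ ε) : ∑ i ∈ s, |f i - g i| ≤ 2 * ε := by
  have hterm : ∀ i ∈ s, |f i - g i| = 2 * (if f i ≤ g i then g i - f i else 0) - (g i - f i) := by
    intro i _
    split_ifs with hle
    · rw [abs_of_nonpos (by linarith)]
      ring
    · rw [abs_of_pos (by linarith)]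
      ring
  have hexcess := hε (s.filter fun i => f i ≤ g i) (Finset.filter_subset _ _)
  rw [Finset.sum_congr rfl hterm, Finset.sum_sub_distrib, ← Finset.mul_sum, ← Finset.sum_filter,
    Finset.sum_sub_distrib, Finset.sum_sub_distrib]
  linarith

variable {Ω ι : Type*} [MeasurableSpace Ω] {μ : Measure Ω}

theorem pmfOf_natCast (Y : Ω → ℕ) :
    pmfOf μ (fun ω => (Y ω : ℝ)) = fun k => μ.real (Y ⁻¹' {k}) := by
  funext k
  simp only [pmfOf, Nat.cast_inj]
  rfl

theorem measureReal_preimage_singleton_eq_zero_of_lt {Y : Ω → ℕ} {n k : ℕ} (hY : ∀ ω, Y ω ≤ n)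
    (hk : n < k) : μ.real (Y ⁻¹' {k}) = 0 := by
  rw [Set.preimage_singleton_eq_empty.2 fun ⟨ω, hω⟩ => ((hY ω).trans_lt hk).ne hω,
    measureReal_empty]

theorem IsBernoulli.exists_natCast_eq {X : Ω → ℝ} {p : ℝ} (hX : IsBernoulli μ X p) :
    ∃ N : Ω → ℕ, Measurable N ∧ (∀ ω, N ω ≤ 1) ∧ X = fun ω => (N ω : ℝ) := by
  have hvalue : ∀ ω, ∃ k : ℕ, k ≤ 1 ∧ X ω = k := fun ω =>
    (hX.2.1 ω).elim (fun h => ⟨0, by simp [h]⟩) fun h => ⟨1, by simp [h]⟩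
  choose N hN hXN using hvalue
  obtain rfl : X = fun ω => (N ω : ℝ) := funext hXN
  exact ⟨N, MeasurableEmbedding.natCast.measurable_comp_iff.1 hX.1, hN, rfl⟩

theorem IsBernoulli.integral_eq {X : Ω → ℝ} {p : ℝ} (hX : IsBernoulli μ X p) (hp : 0 ≤ p) :
    ∫ ω, X ω ∂μ = p := by
  have hindicator : X = (X ⁻¹' {1}).indicator 1 := by
    funext ω
    rcases hX.2.1 ω with h | h <;> simp [h]
  rw [hindicator, integral_indicator_one (hX.1 (measurableSet_singleton 1)), measureReal_def]
  exact hX.2.2 ▸ ENNReal.toReal_ofReal hp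

theorem genOutside_le {X : ι → Ω → ℝ} (hX : ∀ β, Measurable (X β)) (B : Set ι) :
    genOutside X B ≤ ‹MeasurableSpace Ω› :=
  Measurable.comap_le (measurable_pi_lambda _ fun β => hX β)

theorem measurable_genOutside (X : ι → Ω → ℝ) {B : Set ι} {β : ι} (hβ : β ∉ B) :
    Measurable[genOutside X B] (X β) := by
  let i : (Set.univ \ B : Set ι) := ⟨β, Set.mem_univ β, hβ⟩
  exact (measurable_pi_apply (X := fun _ => ℝ) i).comp (comap_measurable _)

theorem abs_add_sub_le_mul {g : ℕ → ℝ} {D : ℝ} (hg : ∀ n, |g (n + 1) - g n| ≤ D) (n k : ℕ) :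
    |g (n + k) - g n| ≤ D * k := by
  have hchain := dist_le_Ico_sum_of_dist_le (f := g) (d := fun _ => D) (Nat.le_add_right n k)
    fun {i} _ _ => by rw [dist_comm]; exact hg i
  rw [dist_comm, Real.dist_eq] at hchain
  simpa [mul_comm] using hchain

theorem abs_integral_mul_le_mul_integral_abs_condExp {Ω : Type*} {G mΩ : MeasurableSpace Ω}
    {μ : Measure Ω} [IsFiniteMeasure μ] (hG : G ≤ mΩ) {Z g : Ω → ℝ} {C : ℝ}
    (hZ : Integrable Z μ) (hg : StronglyMeasurable[G] g) (hC : ∀ ω, |g ω| ≤ C) :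
    |∫ ω, Z ω * g ω ∂μ| ≤ C * ∫ ω, |(μ[Z | G]) ω| ∂μ := by
  have hZg : Integrable (Z * g) μ :=
    hZ.mul_bdd (hg.mono hG).aestronglyMeasurable (ae_of_all _ hC)
  have hpull := condExp_mul_of_stronglyMeasurable_right hg hZg hZ
  calc |∫ ω, Z ω * g ω ∂μ| = |∫ ω, (μ[Z | G]) ω * g ω ∂μ| := by
        rw [← integral_condExp hG (f := fun ω => Z ω * g ω)]
        exact congrArg _ (integral_congr_ae hpull)
    _ ≤ ∫ ω, C * |(μ[Z | G]) ω| ∂μ := by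
        rw [← Real.norm_eq_abs]
        refine norm_integral_le_of_norm_le (integrable_condExp.abs.const_mul C)
          (ae_of_all _ fun ω => ?_)
        rw [norm_mul, mul_comm]
        exact mul_le_mul_of_nonneg_right (hC ω) (norm_nonneg _)
    _ = C * ∫ ω, |(μ[Z | G]) ω| ∂μ := integral_const_mul _ _

section Sums

variable {N : ι → Ω → ℕ} {g : ℕ → ℝ} {C D : ℝ}

theorem abs_integral_mul_sub_sum_le (hD : ∀ n, |g (n + 1) - g n| ≤ D) {Z : Ω → ℝ} (hZ : 0 ≤ Z)
    {s : Finset ι} (hZN : ∀ β ∈ s, Integrable (fun ω => Z ω * N β ω) μ) (V : Ω → ℕ) :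
    |∫ ω, Z ω * (g (V ω + ∑ β ∈ s, N β ω) - g (V ω)) ∂μ|
      ≤ D * ∑ β ∈ s, ∫ ω, Z ω * N β ω ∂μ := by
  rw [← integral_finsetSum _ hZN, ← integral_const_mul, ← Real.norm_eq_abs]
  refine norm_integral_le_of_norm_le ((integrable_finsetSum _ hZN).const_mul D)
    (ae_of_all _ fun ω => ?_)
  rw [norm_mul, Real.norm_of_nonneg (hZ ω), Real.norm_eq_abs, ← Finset.mul_sum, mul_left_comm,
    ← Nat.cast_sum]
  exact mul_le_mul_of_nonneg_left (abs_add_sub_le_mul hD _ _) (hZ ω)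

theorem sum_compl_singleton_eq_add [Fintype ι] [DecidableEq ι] (n : ι → ℕ) {α : ι} {B : Finset ι}
    (hα : α ∈ B) : ∑ β ∈ {α}ᶜ, n β = ∑ β ∈ Bᶜ, n β + ∑ β ∈ B \ {α}, n β := by
  rw [← Finset.sum_union (disjoint_compl_left.mono_right Finset.sdiff_subset)]
  congr 1
  ext β
  by_cases hβ : β = α <;> simp [hβ, hα, em']

theorem sum_mul_sum_eq_sum_mul_sum_compl_add_one [Fintype ι] [DecidableEq ι] (f : ℕ → ℝ)
    {n : ι → ℕ} (hn : ∀ α, n α ≤ 1) :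
    ((∑ α, n α : ℕ) : ℝ) * f (∑ α, n α) = ∑ α, n α * f (∑ β ∈ {α}ᶜ, n β + 1) := by
  rw [Nat.cast_sum, Finset.sum_mul]
  refine Finset.sum_congr rfl fun α _ => ?_
  rw [← Finset.sum_compl_add_sum {α} n, Finset.sum_singleton]
  rcases Nat.le_one_iff_eq_zero_or_eq_one.1 (hn α) with h | h <;> simp [h]

theorem integrable_natCast [IsFiniteMeasure μ] (hN : ∀ α, Measurable (N α))
    (hN₁ : ∀ α ω, N α ω ≤ 1) (α : ι) : Integrable (fun ω => (N α ω : ℝ)) μ := by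
  refine Integrable.of_bound (by fun_prop) 1 (ae_of_all _ fun ω => ?_)
  rw [Real.norm_of_nonneg (by positivity)]
  exact_mod_cast hN₁ α ω

theorem integrable_natCast_mul_natCast [IsFiniteMeasure μ] (hN : ∀ α, Measurable (N α))
    (hN₁ : ∀ α ω, N α ω ≤ 1) (α β : ι) : Integrable (fun ω => (N α ω : ℝ) * N β ω) μ := by
  refine (integrable_natCast hN hN₁ α).mul_bdd (c := 1) (by fun_prop) (ae_of_all _ fun ω => ?_)
  rw [Real.norm_of_nonneg (by positivity)]
  exact_mod_cast hN₁ β ω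

theorem integrable_mul_comp (hC : ∀ n, |g n| ≤ C) {Z : Ω → ℝ} (hZ : Integrable Z μ) {Y : Ω → ℕ}
    (hY : Measurable Y) : Integrable (fun ω => Z ω * g (Y ω)) μ :=
  hZ.mul_bdd (by fun_prop) (ae_of_all _ fun _ => hC _)

variable [Fintype ι] [DecidableEq ι] [IsProbabilityMeasure μ] {p : ι → ℝ}

theorem abs_integral_sub_mul_sum_compl_le (hN : ∀ α, Measurable (N α)) (hN₁ : ∀ α ω, N α ω ≤ 1)
    (hC : ∀ n, |g n| ≤ C) (c : ℝ) (α : ι) (B : Finset ι) :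
    |∫ ω, (N α ω - c) * g (∑ β ∈ Bᶜ, N β ω) ∂μ|
      ≤ C * ∫ ω, |(μ[(fun ω' => (N α ω' : ℝ) - c)
          | genOutside (fun β ω => (N β ω : ℝ)) (↑B : Set ι)]) ω| ∂μ := by
  refine abs_integral_mul_le_mul_integral_abs_condExp (genOutside_le (fun β => by fun_prop) _)
    ((integrable_natCast hN hN₁ α).sub (integrable_const c))
    (Measurable.stronglyMeasurable ?_) fun ω => hC _
  refine (Measurable.of_discrete (f := g)).comp (Finset.measurable_fun_sum _ fun β hβ => ?_)
  exact MeasurableEmbedding.natCast.measurable_comp_iff.1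
    (measurable_genOutside (fun β ω => (N β ω : ℝ)) (by simpa using hβ))

theorem integral_mul_sub_mul_eq (hN : ∀ α, Measurable (N α)) (hN₁ : ∀ α ω, N α ω ≤ 1)
    (hC : ∀ n, |g n| ≤ C) (c : ℝ) {α : ι} {B : Finset ι} (hα : α ∈ B) :
    ∫ ω, (c * g (∑ β, N β ω) - N α ω * g (∑ β ∈ {α}ᶜ, N β ω)) ∂μ
      = ∫ ω, c * (g (∑ β ∈ Bᶜ, N β ω + ∑ β ∈ B, N β ω) - g (∑ β ∈ Bᶜ, N β ω)) ∂μ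
        - ∫ ω, N α ω * (g (∑ β ∈ Bᶜ, N β ω + ∑ β ∈ B \ {α}, N β ω) - g (∑ β ∈ Bᶜ, N β ω)) ∂μ
        - ∫ ω, (N α ω - c) * g (∑ β ∈ Bᶜ, N β ω) ∂μ := by
  have hint := integrable_natCast (μ := μ) hN hN₁ α
  have hmeas (s : Finset ι) : Measurable fun ω => ∑ β ∈ s, N β ω := by fun_prop
  have hdiff {Z : Ω → ℝ} (hZ : Integrable Z μ) (s : Finset ι) : Integrable (fun ω =>
      Z ω * (g (∑ β ∈ Bᶜ, N β ω + ∑ β ∈ s, N β ω) - g (∑ β ∈ Bᶜ, N β ω))) μ := by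
    simp only [mul_sub]
    exact (integrable_mul_comp hC hZ ((hmeas _).add (hmeas s))).sub
      (integrable_mul_comp hC hZ (hmeas _))
  rw [← integral_sub, ← integral_sub]
  · simp only [← Finset.sum_compl_add_sum B, sum_compl_singleton_eq_add _ hα]
    exact integral_congr_ae (ae_of_all _ fun ω => by ring)
  · exact (hdiff (integrable_const c) B).sub (hdiff hint _)
  · exact integrable_mul_comp hC (hint.sub (integrable_const c)) (hmeas _)
  · exact hdiff (integrable_const c) B
  · exact hdiff hint _

theorem abs_integral_mul_sub_mul_le (hN : ∀ α, Measurable (N α)) (hN₁ : ∀ α ω, N α ω ≤ 1)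
    (hp : ∀ α, ∫ ω, (N α ω : ℝ) ∂μ = p α) (hC : ∀ n, |g n| ≤ C)
    (hD : ∀ n, |g (n + 1) - g n| ≤ D) {α : ι} {B : Finset ι} (hα : α ∈ B) :
    |∫ ω, (p α * g (∑ β, N β ω) - N α ω * g (∑ β ∈ {α}ᶜ, N β ω)) ∂μ|
      ≤ D * (∑ β ∈ B, p α * p β + ∑ β ∈ B \ {α}, ∫ ω, (N α ω : ℝ) * N β ω ∂μ)
        + C * ∫ ω, |(μ[(fun ω' => (N α ω' : ℝ) - p α)
            | genOutside (fun β ω => (N β ω : ℝ)) (↑B : Set ι)]) ω| ∂μ := by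
  have hp₀ : 0 ≤ p α := hp α ▸ integral_nonneg fun ω => Nat.cast_nonneg _
  have hmean : ∑ β ∈ B, ∫ ω, p α * (N β ω : ℝ) ∂μ = ∑ β ∈ B, p α * p β := by
    simp only [integral_const_mul, hp]
  have hfirst := abs_integral_mul_sub_sum_le hD (fun _ => hp₀)
    (fun β _ => (integrable_natCast (μ := μ) hN hN₁ β).const_mul (p α)) (s := B)
    (fun ω => ∑ β ∈ Bᶜ, N β ω)
  have hsecond := abs_integral_mul_sub_sum_le hD (fun _ => Nat.cast_nonneg _)
    (fun β _ => integrable_natCast_mul_natCast (μ := μ) hN hN₁ α β) (s := B \ {α})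
    (fun ω => ∑ β ∈ Bᶜ, N β ω)
  have hthird := abs_integral_sub_mul_sum_compl_le (μ := μ) hN hN₁ hC (p α) α B
  rw [hmean] at hfirst
  rw [integral_mul_sub_mul_eq hN hN₁ hC (p α) hα]
  rw [abs_le] at hfirst hsecond hthird ⊢
  constructor <;> linarith

theorem abs_integral_stein_operator_le (hN : ∀ α, Measurable (N α)) (hN₁ : ∀ α ω, N α ω ≤ 1)
    (hp : ∀ α, ∫ ω, (N α ω : ℝ) ∂μ = p α) {f : ℕ → ℝ} (hC : ∀ n, |f (n + 1)| ≤ C)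
    (hD : ∀ n, |f (n + 2) - f (n + 1)| ≤ D) {B : ι → Finset ι} (hB : ∀ α, α ∈ B α) :
    |∫ ω, ((∑ α, p α) * f (∑ α, N α ω + 1) - (∑ α, N α ω : ℕ) * f (∑ α, N α ω)) ∂μ|
      ≤ (chenSteinB₁ p B + chenSteinB₂ μ (fun α ω => (N α ω : ℝ)) B) * D
        + chenSteinB₃ μ (fun α ω => (N α ω : ℝ)) p B * C := by
  have hint := integrable_natCast (μ := μ) hN hN₁
  calc |∫ ω, ((∑ α, p α) * f (∑ α, N α ω + 1) - (∑ α, N α ω : ℕ) * f (∑ α, N α ω)) ∂μ|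
      = |∑ α, ∫ ω, (p α * f (∑ β, N β ω + 1) - N α ω * f (∑ β ∈ {α}ᶜ, N β ω + 1)) ∂μ| := by
        rw [← integral_finsetSum]
        · simp only [sum_mul_sum_eq_sum_mul_sum_compl_add_one f fun α => hN₁ α _, Finset.sum_mul,
            Finset.sum_sub_distrib]
        · exact fun α _ => (integrable_mul_comp hC (integrable_const (p α)) (by fun_prop)).sub
            (integrable_mul_comp hC (hint α) (by fun_prop))
    _ ≤ ∑ α, |∫ ω, (p α * f (∑ β, N β ω + 1) - N α ω * f (∑ β ∈ {α}ᶜ, N β ω + 1)) ∂μ| :=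
        Finset.abs_sum_le_sum_abs _ _
    _ ≤ _ := by
        rw [mul_comm _ D, mul_comm _ C, chenSteinB₁, chenSteinB₂, chenSteinB₃,
          ← Finset.sum_add_distrib, Finset.mul_sum, Finset.mul_sum, ← Finset.sum_add_distrib]
        exact Finset.sum_le_sum fun α _ =>
          abs_integral_mul_sub_mul_le hN hN₁ hp hC hD (hB α)

theorem abs_integral_sub_poissonExpectation_le (hN : ∀ α, Measurable (N α))
    (hN₁ : ∀ α ω, N α ω ≤ 1) (hp : ∀ α, ∫ ω, (N α ω : ℝ) ∂μ = p α) (hp₀ : 0 < ∑ α, p α)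
    {B : ι → Finset ι} (hB : ∀ α, α ∈ B α) {h : ℕ → ℝ} (hh : ∀ k, h k ∈ Set.Icc 0 1) :
    |∫ ω, h (∑ α, N α ω) ∂μ - poissonExpectation (∑ α, p α) h|
      ≤ (chenSteinB₁ p B + chenSteinB₂ μ (fun α ω => (N α ω : ℝ)) B)
          * ((1 - exp (-∑ α, p α)) / (∑ α, p α))
        + chenSteinB₃ μ (fun α ω => (N α ω : ℝ)) p B * min 1 (1.4 / √(∑ α, p α)) := by
  have hstein := abs_integral_stein_operator_le (μ := μ) hN hN₁ hp
    (fun n => abs_steinSolution_le hp₀ hh (n + 1)) (abs_steinSolution_sub_le hp₀ hh) hB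
  have hhint : Integrable (fun ω => h (∑ α, N α ω)) μ :=
    .of_bound (by fun_prop) 1 (ae_of_all _ fun ω => by
      rw [Real.norm_of_nonneg (hh _).1]
      exact (hh _).2)
  simp only [steinSolution_stein_equation hp₀] at hstein
  rwa [integral_sub hhint (integrable_const _), integral_const, probReal_univ, one_smul] at hstein

theorem sum_abs_poissonPMF_sub_measureReal_le (hN : ∀ α, Measurable (N α))
    (hN₁ : ∀ α ω, N α ω ≤ 1) (hp : ∀ α, ∫ ω, (N α ω : ℝ) ∂μ = p α) (hp₀ : 0 < ∑ α, p α)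
    {B : ι → Finset ι} (hB : ∀ α, α ∈ B α) {s : Finset ℕ} (hs : ∀ ω, ∑ α, N α ω ∈ s) :
    ∑ k ∈ s, |Po (∑ α, p α) k - μ.real ((fun ω => ∑ α, N α ω) ⁻¹' {k})|
      ≤ 2 * ((chenSteinB₁ p B + chenSteinB₂ μ (fun α ω => (N α ω : ℝ)) B)
          * ((1 - exp (-∑ α, p α)) / (∑ α, p α))
        + chenSteinB₃ μ (fun α ω => (N α ω : ℝ)) p B * min 1 (1.4 / √(∑ α, p α))) := by
  have hmeas : Measurable fun ω => ∑ α, N α ω := by fun_prop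
  have hlaw (A : Finset ℕ) : ∑ k ∈ A, μ.real ((fun ω => ∑ α, N α ω) ⁻¹' {k})
      = μ.real ((fun ω => ∑ α, N α ω) ⁻¹' A) :=
    sum_measureReal_preimage_singleton A fun k _ => hmeas (measurableSet_singleton k)
  refine sum_abs_sub_le_two_mul ?_ fun A _ => ?_
  · have huniv : (fun ω => ∑ α, N α ω) ⁻¹' s = Set.univ := Set.eq_univ_of_forall hs
    rw [hlaw, huniv, probReal_univ]
    exact sum_le_hasSum s (fun k _ => poissonPMF_nonneg hp₀.le k) (hasSum_poissonPMF _)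
  · have hexpectation : poissonExpectation (∑ α, p α) ((A : Set ℕ).indicator 1)
        = ∑ k ∈ A, Po (∑ α, p α) k := by
      rw [poissonExpectation, tsum_eq_sum (s := A) fun k hk => by simp [hk]]
      exact Finset.sum_congr rfl fun k hk => by simp [hk]
    have hprob : ∫ ω, (A : Set ℕ).indicator (1 : ℕ → ℝ) (∑ α, N α ω) ∂μ
        = μ.real ((fun ω => ∑ α, N α ω) ⁻¹' A) :=
      integral_indicator_one (hmeas A.measurableSet)
    rw [hlaw, ← hexpectation, ← hprob]
    exact (le_abs_self _).trans (abs_integral_sub_poissonExpectation_le hN hN₁ hp hp₀ hB fun k =>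
      ⟨Set.indicator_nonneg (fun _ _ => zero_le_one) k,
        Set.indicator_le_self' (fun _ _ => zero_le_one) k⟩)

end Sums

end ChenStein

/-- **Main theorem: Poisson approximation of the entropy of dependent Bernoulli sums.**
Let `I` be a finite index set with `m = |I|`, `X α` Bernoulli with `p α = P(X α = 1) > 0`,
`W = ∑ α, X α`, `λ = ∑ α, p α ∈ (0, ∞)`, and `B α ∋ α` neighborhoods of dependence, with
Chen–Stein coefficients `b₁, b₂, b₃`.  Let
`a(λ) = 2[(b₁ + b₂)(1 − e^{−λ})/λ + b₃ min{1, 1.4/√λ}]` and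
`b(λ) = [max{λ log(e/λ), 0} + λ² + (6 log(2π) + 1)/12] · exp{−[λ + (m−1) log((m−1)/(λe))]}`.
If `a(λ) ≤ 1/2` and `λ ≤ m − 1`, then for `Z ∼ Po(λ)`,
`|H(Z) − H(W)| ≤ a(λ) log((m + 2)/a(λ)) + b(λ)`. -/
theorem entropy_poisson_approximation_dependent
    {Ω ι : Type*} [MeasurableSpace Ω] [Fintype ι] [DecidableEq ι]
    (μ : Measure Ω) [IsProbabilityMeasure μ]
    (X : ι → Ω → ℝ) (p : ι → ℝ) (B : ι → Finset ι)
    (hBern : ∀ α, IsBernoulli μ (X α) (p α))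
    (hp_pos : ∀ α, 0 < p α)
    (hB : ∀ α, α ∈ B α)
    (m : ℕ) (hm : m = Fintype.card ι)
    (lam b1 b2 b3 a b : ℝ)
    (hlam : lam = ∑ α, p α)
    (hlam_pos : 0 < lam)
    (hb1 : b1 = ∑ α, ∑ β ∈ B α, p α * p β)
    (hb2 : b2 = ∑ α, ∑ β ∈ B α \ {α}, ∫ ω, X α ω * X β ω ∂μ)
    (hb3 : b3 = ∑ α, ∫ ω,
        |(μ[(fun ω' => X α ω' - p α) | genOutside X (↑(B α) : Set ι)]) ω| ∂μ)
    (ha : a = 2 * ((b1 + b2) * ((1 - Real.exp (-lam)) / lam)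
        + b3 * min 1 (1.4 / Real.sqrt lam)))
    (hb : b = (max (lam * Real.log (Real.exp 1 / lam)) 0 + lam ^ 2
          + (6 * Real.log (2 * Real.pi) + 1) / 12)
        * Real.exp (-(lam + ((m : ℝ) - 1) * Real.log (((m : ℝ) - 1) / (lam * Real.exp 1)))))
    (ha_le : a ≤ 1 / 2)
    (hlam_le : lam ≤ (m : ℝ) - 1) :
    |entropyPMF (poissonPMF lam) - entropyPMF (pmfOf μ (fun ω => ∑ α, X α ω))|
      ≤ a * Real.log (((m : ℝ) + 2) / a) + b := by
  choose N hN hN₁ hXN using fun α => (hBern α).exists_natCast_eq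
  obtain rfl : X = fun α ω => (N α ω : ℝ) := funext hXN
  subst hlam hb1 hb2 hb3
  obtain ⟨n, rfl⟩ : ∃ n, m = n + 1 :=
    Nat.exists_eq_add_one.2 (Nat.cast_pos.1 (show (0 : ℝ) < m by linarith))
  rw [Nat.cast_succ, add_sub_cancel_right] at hlam_le hb
  have hW : ∀ ω, ∑ α, N α ω ≤ n + 1 := fun ω => by
    simpa [hm] using Finset.sum_le_card_nsmul Finset.univ (N · ω) 1 fun α _ => hN₁ α ω
  have hdist := (sum_abs_poissonPMF_sub_measureReal_le hN hN₁
    (fun α => (hBern α).integral_eq (hp_pos α).le) hlam_pos hB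
    fun ω => Finset.mem_range_succ_iff.2 (hW ω)).trans_eq ha.symm
  have ha_nonneg : 0 ≤ a := (Finset.sum_nonneg fun _ _ => abs_nonneg _).trans hdist
  have hentropy := abs_entropyPMF_poissonPMF_sub_le hlam_pos hlam_le
    (fun k => ⟨measureReal_nonneg, measureReal_le_one⟩)
    (fun k => measureReal_preimage_singleton_eq_zero_of_lt hW) hdist ha_le
  have hlog : 0 ≤ log (2 * π) := log_nonneg (by linarith [pi_gt_three])
  simp only [← Nat.cast_sum, pmfOf_natCast, hb]
  refine hentropy.trans (add_le_add
    (mul_log_div_le_mul_log_div ha_nonneg (by positivity) (by push_cast; linarith)) ?_)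
  gcongr ?_ * _
  nlinarith
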